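/- (Bernstein inequality for spatial lattice processes.) Let Z = {Z(s) : s ∈ Z^N} be a real-valued random field with α-mixing coefficients {α(k) : k ∈ N_+}, such that each Z(s) is bounded by a uniform constant B, has expectation zero, and variance uniformly bounded by σ². Put ᾱ_k = Σ_{u=1}^k u^{N−1}·α(u). Let P(n), Q(n) be nondecreasing sequences in N_+^N indexed by n ∈ N_+^N with 1 ≤ Q_i(n_i) ≤ P_i(n_i) < Q_i(n_i) + P_i(n_i) < n_i for each 1 ≤ i ≤ N, and set ñ = |I_n| = n_1···n_N, P̃ = P_1(n_1)···P_N(n_N), q̲ = min_i Q_i(n_i), p̄ = max_i P_i(n_i). Then there exists a constant γ depending only on the lattice dimension N such that for all ε > 0 and all β > 0 with 2^{N+1}·B·P̃·e·β < 1: P( |Σ_{s∈I_n} Z(s)| > ε ) ≤ 2·exp{ 12√e·2^N·(ñ/P̃)·α(q̲)^{P̃/[ñ(2^N+1)]} } · exp{ −βε + 2^{3N}·β²·e·(σ² + 12·B²·γ·ᾱ_{p̄})·ñ }. -/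

import Mathlib

open MeasureTheory Filter

noncomputable section

/-- `ℓ∞`-distance between two lattice points of `ℤ^N`. -/
def latDist {N : ℕ} (s t : Fin N → ℤ) : ℕ := Finset.univ.sup fun i => (s i - t i).natAbs

/-- The σ-algebra generated by the random variables `Z(s)`, `s ∈ I`. -/
def fieldSigma {N : ℕ} {Ω E : Type*} [MeasurableSpace E]
    (Z : (Fin N → ℤ) → Ω → E) (I : Set (Fin N → ℤ)) : MeasurableSpace Ω :=
  ⨆ s ∈ I, MeasurableSpace.comap (Z s) inferInstance

/-- The spatial α-mixing coefficient
`α(k) = sup_{d∞(I,J) ≥ k} sup_{A ∈ F(I), B ∈ F(J)} |P(A∩B) − P(A)P(B)|`. -/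
def alphaMix {N : ℕ} {Ω E : Type*} [MeasurableSpace Ω] [MeasurableSpace E]
    (P : Measure Ω) (Z : (Fin N → ℤ) → Ω → E) (k : ℕ) : ℝ :=
  sSup { x : ℝ | ∃ I J : Set (Fin N → ℤ),
    (∀ s ∈ I, ∀ t ∈ J, k ≤ latDist s t) ∧
    ∃ A B : Set Ω, MeasurableSet[fieldSigma Z I] A ∧ MeasurableSet[fieldSigma Z J] B ∧
      x = |(P (A ∩ B)).toReal - (P A).toReal * (P B).toReal| }

/-- `ᾱ_k = Σ_{u=1}^k u^{N−1} α(u)`. -/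
def abar {N : ℕ} {Ω E : Type*} [MeasurableSpace Ω] [MeasurableSpace E]
    (P : Measure Ω) (Z : (Fin N → ℤ) → Ω → E) (k : ℕ) : ℝ :=
  ∑ u ∈ Finset.Icc 1 k, (u : ℝ) ^ (N - 1) * alphaMix P Z u

/-- The observation window `I_n = {s ∈ ℤ^N : e_N ≤ s ≤ n}`. -/
def obsIdx {N : ℕ} (n : Fin N → ℕ) : Finset (Fin N → ℤ) :=
  Finset.Icc (fun _ => 1) (fun i => (n i : ℤ))

/-! Tile `ℤ^N` by cells whose sides split into a long and a short segment. This sorts the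
observation window into `2 ^ N` classes of blocks, and distinct blocks of one class are separated
by at least a short segment. Jensen's inequality reduces the moment generating function of the
total sum at `β` to those of the class sums at `2 ^ N * β`, where each scaled block sum is at most
`1` in absolute value. The moment generating function of one block sum is then controlled by its
variance, hence by the covariance inequality for mixing σ-algebras. Decoupling the `R` blocks of a
class by the same inequality costs `R * α * exp R`; the better of the resulting bound and the
trivial bound `exp R` has an error factor `exp (O (R * α ^ (1 / (R + 1))))`, which is the source
of the fractional power of `α`. Chernoff's bound concludes. -/

section

open ProbabilityTheory

/-- `StrongMixingLE F G P α` says that Rosenblatt's strong mixing coefficient of the σ-algebras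
`F` and `G` is at most `α`. It is the only form in which dependence enters the argument. -/
def StrongMixingLE {Ω : Type*} (F G : MeasurableSpace Ω) {_ : MeasurableSpace Ω}
    (P : Measure Ω) (α : ℝ) : Prop :=
  ∀ A B, MeasurableSet[F] A → MeasurableSet[G] B →
    |P.real (A ∩ B) - P.real A * P.real B| ≤ α

section StrongMixing

variable {Ω : Type*} {F G mΩ : MeasurableSpace Ω} {P : Measure Ω}

theorem StrongMixingLE.nonneg {α : ℝ} (h : StrongMixingLE F G P α) : 0 ≤ α := by
  simpa using h ∅ ∅ (@MeasurableSet.empty _ F) (@MeasurableSet.empty _ G)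

theorem ae_abs_sum_le_sum {ι : Type*} {X : ι → Ω → ℝ} {M : ι → ℝ}
    (hM : ∀ i, ∀ᵐ ω ∂P, |X i ω| ≤ M i) (T : Finset ι) :
    ∀ᵐ ω ∂P, |∑ i ∈ T, X i ω| ≤ ∑ i ∈ T, M i := by
  filter_upwards [(ae_ball_iff T.countable_toSet).mpr fun i _ => hM i] with ω hω
  exact (Finset.abs_sum_le_sum_abs _ _).trans (Finset.sum_le_sum hω)

theorem integrable_exp_mul_sum [IsFiniteMeasure P] {ι : Type*} {X : ι → Ω → ℝ} {M : ι → ℝ}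
    (hX : ∀ i, AEMeasurable (X i) P) (hM : ∀ i, ∀ᵐ ω ∂P, |X i ω| ≤ M i) (T : Finset ι) (t : ℝ) :
    Integrable (fun ω => Real.exp (t * ∑ i ∈ T, X i ω)) P :=
  integrable_exp_mul_of_mem_Icc (T.aemeasurable_fun_sum fun i _ => hX i)
    ((ae_abs_sum_le_sum hM T).mono fun _ => abs_le.mp)

theorem mgf_sum_eq_integral_prod {ι : Type*} (X : ι → Ω → ℝ) (T : Finset ι) (t : ℝ) :
    mgf (fun ω => ∑ i ∈ T, X i ω) P t = ∫ ω, ∏ i ∈ T, Real.exp (t * X i ω) ∂P := by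
  simp only [mgf, Finset.mul_sum, Real.exp_sum]

variable [IsProbabilityMeasure P]

theorem covariance_eq_integral_mul_sub {X W : Ω → ℝ} (hX : MemLp X 2 P) (hW : MemLp W 2 P) :
    cov[X, W; P] = ∫ ω, X ω * (W ω - P[W]) ∂P := by
  have hW' : MemLp (fun ω => W ω - P[W]) 2 P := hW.sub (memLp_const _)
  have hcentered : P[fun ω => W ω - P[W]] = 0 := by
    simp [integral_sub (hW.integrable one_le_two) (integrable_const _)]
  rw [← covariance_sub_const_right (hW.integrable one_le_two) P[W], covariance_eq_sub hX hW',
    hcentered, mul_zero, sub_zero]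
  rfl

theorem memLp_indicator_one {A : Set Ω} (hA : MeasurableSet A) :
    MemLp (A.indicator (1 : Ω → ℝ)) 2 P :=
  memLp_indicator_const 2 hA 1 (Or.inr (measure_ne_top P A))

theorem covariance_indicator_one_left {A : Set Ω} (hA : MeasurableSet A) {W : Ω → ℝ}
    (hW : MemLp W 2 P) : cov[A.indicator 1, W; P] = ∫ ω in A, (W ω - P[W]) ∂P := by
  rw [covariance_eq_integral_mul_sub (memLp_indicator_one hA) hW, ← integral_indicator hA]
  refine integral_congr_ae (ae_of_all _ fun ω => ?_)
  by_cases hω : ω ∈ A <;> simp [hω]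

theorem covariance_indicator_indicator {A B : Set Ω} (hA : MeasurableSet A)
    (hB : MeasurableSet B) :
    cov[A.indicator 1, B.indicator 1; P] = P.real (A ∩ B) - P.real A * P.real B := by
  rw [covariance_eq_sub (memLp_indicator_one hA) (memLp_indicator_one hB),
    ← Set.inter_indicator_one, integral_indicator_one hA, integral_indicator_one hB,
    integral_indicator_one (hA.inter hB)]

theorem covariance_le_of_forall_covariance_indicator_le (hF : F ≤ mΩ) {X W : Ω → ℝ} {a b K : ℝ}
    (hX : Measurable[F] X) (hXab : ∀ᵐ ω ∂P, X ω ∈ Set.Icc a b) (hW : MemLp W 2 P)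
    (hK : ∀ A, MeasurableSet[F] A → cov[A.indicator 1, W; P] ≤ K) :
    cov[X, W; P] ≤ (b - a) * K := by
  have hab : 0 ≤ b - a := by
    obtain ⟨ω, hω⟩ := hXab.exists
    linarith [hω.1, hω.2]
  have hX2 : MemLp X 2 P := memLp_of_bounded hXab (hX.mono hF le_rfl).aestronglyMeasurable 2
  have hXa2 : MemLp (fun ω => X ω - a) 2 P := hX2.sub (memLp_const a)
  have hXa : StronglyMeasurable[F] fun ω => X ω - a := (hX.sub_const a).stronglyMeasurable
  set W' : Ω → ℝ := fun ω => W ω - P[W]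
  have hW' : MemLp W' 2 P := hW.sub (memLp_const _)
  have hW'int : Integrable W' P := hW'.integrable one_le_two
  set A : Set Ω := {ω | 0 < P[W'|F] ω}
  have hA : MeasurableSet[F] A :=
    measurableSet_lt measurable_const stronglyMeasurable_condExp.measurable
  calc cov[X, W; P] = ∫ ω, (X ω - a) * W' ω ∂P := by
        rw [← covariance_sub_const_left (hX2.integrable one_le_two) a,
          covariance_eq_integral_mul_sub hXa2 hW]
    _ = ∫ ω, (X ω - a) * P[W'|F] ω ∂P := by
        rw [← integral_condExp hF]
        exact integral_congr_ae
          (condExp_mul_of_stronglyMeasurable_left hXa (hXa2.integrable_mul hW') hW'int)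
    _ ≤ ∫ ω, (b - a) * A.indicator (P[W'|F]) ω ∂P := by
        refine integral_mono_ae (hXa2.integrable_mul (hW'.condExp one_le_two))
          ((integrable_condExp.indicator (hF _ hA)).const_mul _) ?_
        filter_upwards [hXab] with ω hω
        by_cases hωA : ω ∈ A
        · rw [Set.indicator_of_mem hωA]
          exact mul_le_mul_of_nonneg_right (by linarith [hω.2]) (le_of_lt hωA)
        · rw [Set.indicator_of_notMem hωA, mul_zero]
          exact mul_nonpos_of_nonneg_of_nonpos (by linarith [hω.1]) (not_lt.mp hωA)
    _ = (b - a) * cov[A.indicator 1, W; P] := by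
        rw [integral_const_mul, integral_indicator (hF _ hA), setIntegral_condExp hF hW'int hA,
          covariance_indicator_one_left (hF _ hA) hW]
    _ ≤ (b - a) * K := mul_le_mul_of_nonneg_left (hK A hA) hab

theorem StrongMixingLE.covariance_le {α : ℝ} (h : StrongMixingLE F G P α) (hF : F ≤ mΩ)
    (hG : G ≤ mΩ) {X Y : Ω → ℝ} {a b c d : ℝ} (hX : Measurable[F] X) (hY : Measurable[G] Y)
    (hXab : ∀ᵐ ω ∂P, X ω ∈ Set.Icc a b) (hYcd : ∀ᵐ ω ∂P, Y ω ∈ Set.Icc c d) :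
    cov[X, Y; P] ≤ (b - a) * ((d - c) * α) := by
  have hY2 : MemLp Y 2 P := memLp_of_bounded hYcd (hY.mono hG le_rfl).aestronglyMeasurable 2
  refine covariance_le_of_forall_covariance_indicator_le hF hX hXab hY2 fun A hA => ?_
  rw [covariance_comm]
  refine covariance_le_of_forall_covariance_indicator_le hG hY hYcd
    (memLp_indicator_one (hF A hA)) fun B hB => ?_
  rw [covariance_comm, covariance_indicator_indicator (hF A hA) (hG B hB)]
  exact le_of_abs_le (h A B hA hB)

theorem StrongMixingLE.integral_mul_le {α : ℝ} (h : StrongMixingLE F G P α) (hF : F ≤ mΩ)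
    (hG : G ≤ mΩ) {X Y : Ω → ℝ} {a b c d : ℝ} (hX : Measurable[F] X) (hY : Measurable[G] Y)
    (hXab : ∀ᵐ ω ∂P, X ω ∈ Set.Icc a b) (hYcd : ∀ᵐ ω ∂P, Y ω ∈ Set.Icc c d) :
    ∫ ω, X ω * Y ω ∂P ≤ (∫ ω, X ω ∂P) * ∫ ω, Y ω ∂P + (b - a) * ((d - c) * α) := by
  have hcov := h.covariance_le hF hG hX hY hXab hYcd
  rwa [covariance_eq_sub
    (memLp_of_bounded hXab (hX.mono hF le_rfl).aestronglyMeasurable 2)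
    (memLp_of_bounded hYcd (hY.mono hG le_rfl).aestronglyMeasurable 2),
    sub_le_iff_le_add'] at hcov

theorem integral_prod_le_prod_integral_add {ι : Type*} {m : ι → MeasurableSpace Ω}
    (hm : ∀ i, m i ≤ mΩ) {X : ι → Ω → ℝ} {M α : ℝ} (hX : ∀ i, Measurable[m i] (X i))
    (hXM : ∀ i, ∀ᵐ ω ∂P, X i ω ∈ Set.Icc 0 M)
    (hα : ∀ i, StrongMixingLE (m i) (⨆ j ≠ i, m j) P α) (T : Finset ι) :
    ∫ ω, ∏ i ∈ T, X i ω ∂P ≤ ∏ i ∈ T, ∫ ω, X i ω ∂P + T.card * α * M ^ T.card := by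
  classical
  induction T using Finset.induction_on with
  | empty => simp
  | insert i T hi ih =>
    have hM : 0 ≤ M := by
      obtain ⟨ω, hω⟩ := (hXM i).exists
      exact hω.1.trans hω.2
    have hYm : Measurable[⨆ j ≠ i, m j] fun ω => ∏ j ∈ T, X j ω :=
      Finset.measurable_fun_prod T fun j hj => (hX j).mono
        (le_iSup₂_of_le j (fun hji => hi (hji ▸ hj)) le_rfl) le_rfl
    have hYM : ∀ᵐ ω ∂P, ∏ j ∈ T, X j ω ∈ Set.Icc 0 (M ^ T.card) := by
      filter_upwards [(ae_ball_iff T.countable_toSet).mpr fun j _ => hXM j] with ω hω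
      exact ⟨Finset.prod_nonneg fun j hj => (hω j hj).1,
        (Finset.prod_le_prod (fun j hj => (hω j hj).1) fun j hj => (hω j hj).2).trans_eq
          (Finset.prod_const M)⟩
    have hcov := (hα i).integral_mul_le (hm i) (iSup₂_le fun j _ => hm j) (hX i) hYm (hXM i) hYM
    rw [sub_zero, sub_zero] at hcov
    have hmean_nonneg : 0 ≤ ∫ ω, X i ω ∂P :=
      integral_nonneg_of_ae ((hXM i).mono fun ω hω => hω.1)
    have hmean_le : ∫ ω, X i ω ∂P ≤ M :=
      (integral_mono_of_nonneg ((hXM i).mono fun ω hω => hω.1) (integrable_const M)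
        ((hXM i).mono fun ω hω => hω.2)).trans_eq (by simp)
    have herr : 0 ≤ T.card * α * M ^ T.card :=
      mul_nonneg (mul_nonneg T.card.cast_nonneg (hα i).nonneg) (pow_nonneg hM _)
    calc ∫ ω, ∏ j ∈ insert i T, X j ω ∂P = ∫ ω, X i ω * ∏ j ∈ T, X j ω ∂P := by
          simp only [Finset.prod_insert hi]
      _ ≤ (∫ ω, X i ω ∂P) * ∫ ω, ∏ j ∈ T, X j ω ∂P + M * (M ^ T.card * α) := hcov
      _ ≤ (∫ ω, X i ω ∂P) * (∏ j ∈ T, ∫ ω, X j ω ∂P + T.card * α * M ^ T.card) +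
            M * (M ^ T.card * α) := by gcongr
      _ ≤ (∫ ω, X i ω ∂P) * ∏ j ∈ T, ∫ ω, X j ω ∂P + M * (T.card * α * M ^ T.card) +
            M * (M ^ T.card * α) := by
          rw [mul_add]
          gcongr
      _ = ∏ j ∈ insert i T, ∫ ω, X j ω ∂P + (insert i T).card * α * M ^ (insert i T).card := by
          rw [Finset.prod_insert hi, Finset.card_insert_of_notMem hi]
          push_cast
          ring

theorem mgf_le_exp_sq_mul_variance {X : Ω → ℝ} {t : ℝ} (hX : AEMeasurable X P)
    (hbdd : ∀ᵐ ω ∂P, |t * X ω| ≤ 1) (hmean : P[X] = 0) :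
    mgf X P t ≤ Real.exp (t ^ 2 * Var[X; P]) := by
  set Y : Ω → ℝ := fun ω => t * X ω
  have hY : AEMeasurable Y P := hX.const_mul t
  have hY2 : MemLp Y 2 P := MemLp.of_bound hY.aestronglyMeasurable 1 hbdd
  have hYmean : P[Y] = 0 := by rw [integral_const_mul, hmean, mul_zero]
  have hYint : Integrable (fun ω => 1 + Y ω) P :=
    (integrable_const 1).add (hY2.integrable one_le_two)
  calc mgf X P t ≤ ∫ ω, (1 + Y ω + Y ω ^ 2) ∂P := by
        refine integral_mono_of_nonneg (ae_of_all _ fun ω => (Real.exp_pos _).le)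
          (hYint.add hY2.integrable_sq) (hbdd.mono fun ω hω => ?_)
        linarith [le_of_abs_le (Real.abs_exp_sub_one_sub_id_le hω)]
    _ = Var[Y; P] + 1 := by
        rw [integral_add hYint hY2.integrable_sq,
          integral_add (integrable_const 1) (hY2.integrable one_le_two), hYmean,
          variance_of_integral_eq_zero hY hYmean]
        simp [add_comm]
    _ ≤ Real.exp (t ^ 2 * Var[X; P]) := by
        rw [← variance_const_mul t X P]
        exact Real.add_one_le_exp _

theorem exp_mem_Icc_of_abs_le_one {x : ℝ} (hx : |x| ≤ 1) :
    Real.exp x ∈ Set.Icc 0 (Real.exp 1) :=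
  ⟨(Real.exp_pos x).le, Real.exp_le_exp.mpr (le_of_abs_le hx)⟩

theorem mgf_sum_le_exp_card {ι : Type*} {X : ι → Ω → ℝ} {t : ℝ}
    (hbdd : ∀ i, ∀ᵐ ω ∂P, |t * X i ω| ≤ 1) (T : Finset ι) :
    mgf (fun ω => ∑ i ∈ T, X i ω) P t ≤ Real.exp T.card := by
  rw [mgf_sum_eq_integral_prod]
  calc ∫ ω, ∏ i ∈ T, Real.exp (t * X i ω) ∂P ≤ ∫ _, Real.exp T.card ∂P := by
        refine integral_mono_of_nonneg
          (ae_of_all _ fun ω => Finset.prod_nonneg fun i _ => (Real.exp_pos _).le)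
          (integrable_const _) ?_
        filter_upwards [(ae_ball_iff T.countable_toSet).mpr fun i _ => hbdd i] with ω hω
        rw [← Real.exp_sum, Real.exp_le_exp, Finset.card_eq_sum_ones, Nat.cast_sum, Nat.cast_one]
        exact Finset.sum_le_sum fun i hi => le_of_abs_le (hω i hi)
    _ = Real.exp T.card := by simp

theorem mgf_sum_le_of_strongMixing {ι : Type*} {m : ι → MeasurableSpace Ω}
    (hm : ∀ i, m i ≤ mΩ) {X : ι → Ω → ℝ} {t α : ℝ} (hX : ∀ i, Measurable[m i] (X i))
    (hbdd : ∀ i, ∀ᵐ ω ∂P, |t * X i ω| ≤ 1) (hmean : ∀ i, P[X i] = 0)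
    (hα : ∀ i, StrongMixingLE (m i) (⨆ j ≠ i, m j) P α) (T : Finset ι) :
    mgf (fun ω => ∑ i ∈ T, X i ω) P t ≤
      Real.exp (t ^ 2 * ∑ i ∈ T, Var[X i; P]) + T.card * α * Real.exp T.card := by
  rw [mgf_sum_eq_integral_prod]
  refine (integral_prod_le_prod_integral_add hm (fun i => ((hX i).const_mul t).exp)
    (fun i => (hbdd i).mono fun ω => exp_mem_Icc_of_abs_le_one) hα T).trans ?_
  rw [← Real.exp_nat_mul, mul_one, Finset.mul_sum, Real.exp_sum]
  gcongr with i
  exact mgf_le_exp_sq_mul_variance ((hX i).mono (hm i) le_rfl).aemeasurable (hbdd i) (hmean i)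

theorem min_mixing_factor_le_exp {R : ℕ} {α θ L : ℝ} (hα0 : 0 ≤ α) (hα1 : α ≤ 1)
    (hθ : θ * (R + 1) ≤ 1) (hRL : R ≤ L) :
    min (1 + R * α * Real.exp R) (Real.exp R) ≤ Real.exp (Real.exp 1 * L * α ^ θ) := by
  have hx : 0 ≤ α ^ θ := Real.rpow_nonneg hα0 θ
  have hRL' : R * α ^ θ ≤ L * α ^ θ := mul_le_mul_of_nonneg_right hRL hx
  rcases le_total (Real.exp 1 * α ^ θ) 1 with h | h
  · have hαx : α ≤ (α ^ θ) ^ (R + 1) := by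
      rw [← Real.rpow_mul_natCast hα0]
      exact Real.self_le_rpow_of_le_one hα0 hα1 (by exact_mod_cast hθ)
    have hexp : α * Real.exp R ≤ α ^ θ :=
      calc α * Real.exp R ≤ (α ^ θ) ^ (R + 1) * Real.exp 1 ^ R := by
            rw [← Real.exp_nat_mul, mul_one]
            gcongr
        _ = (Real.exp 1 * α ^ θ) ^ R * α ^ θ := by ring
        _ ≤ α ^ θ := mul_le_of_le_one_left hx (pow_le_one₀ (by positivity) h)
    calc min (1 + R * α * Real.exp R) (Real.exp R) ≤ R * (α * Real.exp R) + 1 :=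
          (min_le_left _ _).trans_eq (by ring)
      _ ≤ L * α ^ θ + 1 :=
          add_le_add_left ((mul_le_mul_of_nonneg_left hexp R.cast_nonneg).trans hRL') 1
      _ ≤ Real.exp (L * α ^ θ) := Real.add_one_le_exp _
      _ ≤ Real.exp (Real.exp 1 * L * α ^ θ) := by
          rw [mul_assoc]
          exact Real.exp_le_exp.mpr (le_mul_of_one_le_left
            ((mul_nonneg R.cast_nonneg hx).trans hRL') (Real.one_le_exp zero_le_one))
  · refine (min_le_right _ _).trans (Real.exp_le_exp.mpr ?_)
    calc (R : ℝ) ≤ L * 1 := by rwa [mul_one]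
      _ ≤ L * (Real.exp 1 * α ^ θ) :=
          mul_le_mul_of_nonneg_left h (R.cast_nonneg.trans hRL)
      _ = Real.exp 1 * L * α ^ θ := by ring

theorem mgf_sum_le_exp_rpow_mul {ι : Type*} {m : ι → MeasurableSpace Ω}
    (hm : ∀ i, m i ≤ mΩ) {X : ι → Ω → ℝ} {t α θ L : ℝ} (hX : ∀ i, Measurable[m i] (X i))
    (hbdd : ∀ i, ∀ᵐ ω ∂P, |t * X i ω| ≤ 1) (hmean : ∀ i, P[X i] = 0)
    (hα : ∀ i, StrongMixingLE (m i) (⨆ j ≠ i, m j) P α) (hα0 : 0 ≤ α) (hα1 : α ≤ 1)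
    {T : Finset ι} (hθ : θ * (T.card + 1) ≤ 1) (hTL : T.card ≤ L) :
    mgf (fun ω => ∑ i ∈ T, X i ω) P t ≤
      Real.exp (Real.exp 1 * L * α ^ θ) * Real.exp (t ^ 2 * ∑ i ∈ T, Var[X i; P]) := by
  set V := t ^ 2 * ∑ i ∈ T, Var[X i; P]
  have hV : 1 ≤ Real.exp V := Real.one_le_exp
    (mul_nonneg (sq_nonneg t) (Finset.sum_nonneg fun i _ => variance_nonneg _ _))
  calc mgf (fun ω => ∑ i ∈ T, X i ω) P t
      ≤ min (Real.exp V + T.card * α * Real.exp T.card) (Real.exp T.card) :=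
        le_min (mgf_sum_le_of_strongMixing hm hX hbdd hmean hα T) (mgf_sum_le_exp_card hbdd T)
    _ ≤ min ((1 + T.card * α * Real.exp T.card) * Real.exp V) (Real.exp T.card * Real.exp V) := by
        rw [add_mul, one_mul]
        exact min_le_min (add_le_add_right (le_mul_of_one_le_right (by positivity) hV) _)
          (le_mul_of_one_le_right (by positivity) hV)
    _ = min (1 + T.card * α * Real.exp T.card) (Real.exp T.card) * Real.exp V :=
        (min_mul_of_nonneg _ _ (Real.exp_pos V).le).symm
    _ ≤ Real.exp (Real.exp 1 * L * α ^ θ) * Real.exp V := by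
        gcongr
        exact min_mixing_factor_le_exp hα0 hα1 hθ hTL

end StrongMixing

theorem mgf_sum_le_of_forall_mgf_le {Ω κ : Type*} {mΩ : MeasurableSpace Ω} {P : Measure Ω}
    [Fintype κ] [Nonempty κ] {X : κ → Ω → ℝ} {t C : ℝ}
    (hint : ∀ k, Integrable (fun ω => Real.exp (Fintype.card κ * t * X k ω)) P)
    (hC : ∀ k, mgf (X k) P (Fintype.card κ * t) ≤ C) :
    mgf (fun ω => ∑ k, X k ω) P t ≤ C := by
  set c : ℝ := (Fintype.card κ : ℝ)
  have hc : 0 < c := Nat.cast_pos.mpr Fintype.card_pos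
  have hsum : ∑ _k : κ, c⁻¹ = 1 := by
    rw [Finset.sum_const, Finset.card_univ, nsmul_eq_mul, mul_inv_cancel₀ hc.ne']
  have hjensen (ω : Ω) : Real.exp (t * ∑ k, X k ω) ≤ ∑ k, c⁻¹ * Real.exp (c * t * X k ω) := by
    have hscale : t * ∑ k, X k ω = ∑ k, c⁻¹ • (c * t * X k ω) := by
      rw [Finset.mul_sum]
      refine Finset.sum_congr rfl fun k _ => ?_
      rw [smul_eq_mul, mul_assoc, inv_mul_cancel_left₀ hc.ne']
    rw [hscale]
    exact convexOn_exp.map_sum_le (fun _ _ => (inv_pos.mpr hc).le) hsum fun _ _ => Set.mem_univ _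
  calc mgf (fun ω => ∑ k, X k ω) P t ≤ ∫ ω, ∑ k, c⁻¹ * Real.exp (c * t * X k ω) ∂P :=
        integral_mono_of_nonneg (ae_of_all _ fun ω => (Real.exp_pos _).le)
          (integrable_finsetSum _ fun k _ => (hint k).const_mul _) (ae_of_all _ hjensen)
    _ = ∑ k, c⁻¹ * mgf (X k) P (c * t) := by
        rw [integral_finsetSum _ fun k _ => (hint k).const_mul _]
        simp only [integral_const_mul, mgf]
    _ ≤ ∑ _k : κ, c⁻¹ * C := by
        gcongr with k
        exact hC k
    _ = C := by rw [← Finset.sum_mul, hsum, one_mul]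

theorem measureReal_le_abs_le_exp_mul_mgf_add {Ω : Type*} {mΩ : MeasurableSpace Ω}
    {P : Measure Ω} [IsFiniteMeasure P] {X : Ω → ℝ} {t : ℝ} (ht : 0 ≤ t)
    (hpos : Integrable (fun ω => Real.exp (t * X ω)) P)
    (hneg : Integrable (fun ω => Real.exp (-t * X ω)) P) (ε : ℝ) :
    P.real {ω | ε ≤ |X ω|} ≤ Real.exp (-t * ε) * (mgf X P t + mgf X P (-t)) := by
  have hsub : {ω | ε ≤ |X ω|} ⊆ {ω | ε ≤ X ω} ∪ {ω | X ω ≤ -ε} :=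
    fun ω (hω : ε ≤ |X ω|) => (le_abs'.mp hω).symm
  have hlower := measure_le_le_exp_mul_mgf (-ε) (neg_nonpos.mpr ht) hneg
  rw [neg_neg, mul_neg, ← neg_mul] at hlower
  rw [mul_add]
  exact (measureReal_mono hsub).trans ((measureReal_union_le _ _).trans
    (add_le_add (measure_ge_le_exp_mul_mgf ε ht hpos) hlower))

section Lattice

variable {N : ℕ}

theorem latDist_le_iff {s t : Fin N → ℤ} {b : ℕ} :
    latDist s t ≤ b ↔ ∀ i, (s i - t i).natAbs ≤ b := by
  simp [latDist]

theorem natAbs_sub_le_latDist (s t : Fin N → ℤ) (i : Fin N) : (s i - t i).natAbs ≤ latDist s t :=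
  latDist_le_iff.mp le_rfl i

theorem latDist_eq_zero {s t : Fin N → ℤ} : latDist s t = 0 ↔ s = t := by
  rw [← Nat.le_zero, latDist_le_iff, funext_iff]
  exact forall_congr' fun i => by rw [Nat.le_zero, Int.natAbs_eq_zero, sub_eq_zero]

theorem latDist_le_iff_mem_Icc {s t : Fin N → ℤ} {b : ℕ} :
    latDist s t ≤ b ↔ t ∈ Finset.Icc (fun i => s i - b) (fun i => s i + b) := by
  rw [latDist_le_iff, Finset.mem_Icc, Pi.le_def, Pi.le_def, ← forall_and]
  exact forall_congr' fun i => by omega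

/-- The constant `γ` of the theorem: the `ℓ∞`-sphere of radius `u ≥ 1` in `ℤ^N` has at most
`shellConst N * u ^ (N - 1)` points. -/
def shellConst (N : ℕ) : ℝ := 2 * N * 3 ^ (N - 1)

theorem shellConst_nonneg (N : ℕ) : 0 ≤ shellConst N := by
  unfold shellConst
  positivity

theorem card_Icc_sub_add (s : Fin N → ℤ) (b : ℕ) :
    (Finset.Icc (fun i => s i - b) (fun i => s i + b)).card = (2 * b + 1) ^ N := by
  have hcoord (i : Fin N) : (s i + b + 1 - (s i - b)).toNat = 2 * b + 1 := by omega
  simp only [Pi.card_Icc, Int.card_Icc, hcoord, Finset.prod_const, Finset.card_univ,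
    Fintype.card_fin]

theorem card_latDist_eq_le (D : Finset (Fin N → ℤ)) (s : Fin N → ℤ) {u : ℕ} (hu : 0 < u) :
    ({t ∈ D | latDist s t = u}.card : ℝ) ≤ shellConst N * u ^ (N - 1) := by
  obtain ⟨v, rfl⟩ := Nat.exists_eq_add_of_lt hu
  rw [zero_add]
  set ball : ℕ → Finset (Fin N → ℤ) := fun b => Finset.Icc (fun i => s i - b) (fun i => s i + b)
  have hball : ball v ⊆ ball (v + 1) := fun t ht =>
    latDist_le_iff_mem_Icc.mp ((latDist_le_iff_mem_Icc.mpr ht).trans v.le_succ)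
  have hsub : {t ∈ D | latDist s t = v + 1} ⊆ ball (v + 1) \ ball v := fun t ht => by
    have htv := (Finset.mem_filter.mp ht).2
    rw [Finset.mem_sdiff, ← latDist_le_iff_mem_Icc, ← latDist_le_iff_mem_Icc]
    omega
  calc ({t ∈ D | latDist s t = v + 1}.card : ℝ) ≤ (ball (v + 1) \ ball v).card :=
        Nat.cast_le.mpr (Finset.card_le_card hsub)
    _ = (2 * (v + 1 : ℕ) + 1) ^ N - (2 * v + 1) ^ N := by
        rw [Finset.cast_card_sdiff hball, card_Icc_sub_add, card_Icc_sub_add]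
        push_cast
        rfl
    _ ≤ 2 * N * (2 * (v + 1 : ℕ) + 1) ^ (N - 1) := by
        refine (le_abs_self _).trans ((abs_pow_sub_pow_le _ _ N).trans_eq ?_)
        have hdiff : (2 * (v + 1 : ℕ) + 1 : ℝ) - (2 * v + 1) = 2 := by
          push_cast
          ring
        rw [hdiff, abs_two, abs_of_nonneg (by positivity), abs_of_nonneg (by positivity),
          max_eq_left (by linarith)]
    _ ≤ 2 * N * (3 * (v + 1 : ℕ)) ^ (N - 1) := by
        gcongr
        push_cast
        linarith
    _ = shellConst N * (v + 1 : ℕ) ^ (N - 1) := by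
        rw [shellConst, mul_pow, mul_assoc _ (3 ^ (N - 1))]

theorem sum_erase_comp_latDist_le {f : ℕ → ℝ} (hf : ∀ u, 0 ≤ f u) {D : Finset (Fin N → ℤ)}
    (s : Fin N → ℤ) {b : ℕ} (hD : ∀ t ∈ D, latDist s t ≤ b) :
    ∑ t ∈ D.erase s, f (latDist s t) ≤
      shellConst N * ∑ u ∈ Finset.Icc 1 b, (u : ℝ) ^ (N - 1) * f u := by
  have hmaps : ∀ t ∈ D.erase s, latDist s t ∈ Finset.Icc 1 b := fun t ht =>
    Finset.mem_Icc.mpr ⟨Nat.one_le_iff_ne_zero.mpr fun h =>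
      Finset.ne_of_mem_erase ht (latDist_eq_zero.mp h).symm, hD t (Finset.mem_of_mem_erase ht)⟩
  rw [← Finset.sum_fiberwise_of_maps_to' hmaps f, Finset.mul_sum]
  refine Finset.sum_le_sum fun u hu => ?_
  rw [Finset.sum_const, nsmul_eq_mul, ← mul_assoc]
  exact mul_le_mul_of_nonneg_right (card_latDist_eq_le _ s (Finset.mem_Icc.mp hu).1) (hf u)

end Lattice

section AlphaMix

variable {N : ℕ} {Ω E : Type*} [MeasurableSpace E] {Z : (Fin N → ℤ) → Ω → E}

theorem measurable_fieldSigma {I : Set (Fin N → ℤ)} {s : Fin N → ℤ} (hs : s ∈ I) :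
    Measurable[fieldSigma Z I] (Z s) :=
  measurable_iff_comap_le.mpr (le_iSup₂_of_le s hs le_rfl)

theorem iSup_fieldSigma {ι : Sort*} (I : ι → Set (Fin N → ℤ)) :
    ⨆ i, fieldSigma Z (I i) = fieldSigma Z (⋃ i, I i) :=
  (iSup_iUnion _ _).symm

variable {mΩ : MeasurableSpace Ω} {P : Measure Ω}

theorem fieldSigma_le (hZ : ∀ s, Measurable (Z s)) (I : Set (Fin N → ℤ)) : fieldSigma Z I ≤ mΩ :=
  iSup₂_le fun s _ => (hZ s).comap_le

theorem alphaMix_nonneg (k : ℕ) : 0 ≤ alphaMix P Z k := by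
  refine Real.sSup_nonneg ?_
  rintro x ⟨I, J, -, A, B, -, -, rfl⟩
  exact abs_nonneg _

theorem abar_nonneg (k : ℕ) : 0 ≤ abar P Z k :=
  Finset.sum_nonneg fun _ _ => mul_nonneg (by positivity) (alphaMix_nonneg _)

variable [IsProbabilityMeasure P]

theorem abs_measureReal_inter_sub_mul_le_one (A B : Set Ω) :
    |P.real (A ∩ B) - P.real A * P.real B| ≤ 1 :=
  abs_sub_le_of_nonneg_of_le measureReal_nonneg measureReal_le_one (by positivity)
    (mul_le_one₀ measureReal_le_one measureReal_nonneg measureReal_le_one)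

theorem alphaMix_le_one (k : ℕ) : alphaMix P Z k ≤ 1 := by
  refine Real.sSup_le ?_ zero_le_one
  rintro x ⟨I, J, -, A, B, -, -, rfl⟩
  exact abs_measureReal_inter_sub_mul_le_one A B

theorem strongMixingLE_alphaMix {k : ℕ} {I J : Set (Fin N → ℤ)}
    (h : ∀ s ∈ I, ∀ t ∈ J, k ≤ latDist s t) :
    StrongMixingLE (fieldSigma Z I) (fieldSigma Z J) P (alphaMix P Z k) := fun A B hA hB => by
  refine le_csSup ⟨1, ?_⟩ ⟨I, J, h, A, B, hA, hB, rfl⟩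
  rintro x ⟨I, J, -, A, B, -, -, rfl⟩
  exact abs_measureReal_inter_sub_mul_le_one A B

theorem strongMixingLE_iSup_ne {ι : Type*} {D : ι → Set (Fin N → ℤ)} {k : ℕ}
    (hD : ∀ i j, i ≠ j → ∀ s ∈ D i, ∀ t ∈ D j, k ≤ latDist s t) (i : ι) :
    StrongMixingLE (fieldSigma Z (D i)) (⨆ j ≠ i, fieldSigma Z (D j)) P (alphaMix P Z k) := by
  simp only [iSup_fieldSigma]
  refine strongMixingLE_alphaMix fun s hs t ht => ?_
  obtain ⟨j, hji, htj⟩ := Set.mem_iUnion₂.mp ht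
  exact hD i j hji.symm s hs t htj

end AlphaMix

section BoundedField

variable {N : ℕ} {Ω : Type*} {mΩ : MeasurableSpace Ω} {P : Measure Ω}
  [IsProbabilityMeasure P] {Z : (Fin N → ℤ) → Ω → ℝ} {B : ℝ}

theorem covariance_le_alphaMix (hZ : ∀ s, Measurable (Z s)) (hB : ∀ s, ∀ᵐ ω ∂P, |Z s ω| ≤ B)
    (s t : Fin N → ℤ) : cov[Z s, Z t; P] ≤ 4 * B ^ 2 * alphaMix P Z (latDist s t) := by
  have hmix : StrongMixingLE (fieldSigma Z {s}) (fieldSigma Z {t}) P (alphaMix P Z (latDist s t)) :=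
    strongMixingLE_alphaMix (by simp)
  refine (hmix.covariance_le (fieldSigma_le hZ _) (fieldSigma_le hZ _)
    (measurable_fieldSigma rfl) (measurable_fieldSigma rfl)
    ((hB s).mono fun ω => abs_le.mp) ((hB t).mono fun ω => abs_le.mp)).trans_eq ?_
  ring

theorem variance_sum_le (hZ : ∀ s, Measurable (Z s)) (hB : ∀ s, ∀ᵐ ω ∂P, |Z s ω| ≤ B) {v : ℝ}
    (hv : ∀ s, Var[Z s; P] ≤ v) {D : Finset (Fin N → ℤ)} {b : ℕ}
    (hD : ∀ s ∈ D, ∀ t ∈ D, latDist s t ≤ b) :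
    Var[fun ω => ∑ s ∈ D, Z s ω; P] ≤ D.card * (v + 4 * B ^ 2 * shellConst N * abar P Z b) := by
  have hZ2 (s : Fin N → ℤ) : MemLp (Z s) 2 P := MemLp.of_bound (hZ s).aestronglyMeasurable B (hB s)
  have hrow : ∀ s ∈ D, ∑ t ∈ D, cov[Z s, Z t; P] ≤ v + 4 * B ^ 2 * shellConst N * abar P Z b := by
    intro s hs
    rw [← Finset.add_sum_erase _ _ hs, covariance_self (hZ s).aemeasurable, mul_assoc (4 * B ^ 2)]
    refine add_le_add (hv s) ?_
    calc ∑ t ∈ D.erase s, cov[Z s, Z t; P]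
        ≤ ∑ t ∈ D.erase s, 4 * B ^ 2 * alphaMix P Z (latDist s t) :=
          Finset.sum_le_sum fun t _ => covariance_le_alphaMix hZ hB s t
      _ ≤ 4 * B ^ 2 * (shellConst N * abar P Z b) := by
          rw [← Finset.mul_sum]
          exact mul_le_mul_of_nonneg_left
            (sum_erase_comp_latDist_le alphaMix_nonneg s (hD s hs)) (by positivity)
  rw [variance_fun_sum' fun s _ => hZ2 s, ← nsmul_eq_mul]
  exact Finset.sum_le_card_nsmul _ _ _ hrow

end BoundedField

/-- The trace on one coordinate axis of the tiling of `ℤ^N` into blocks. The axis is cut, starting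
at `1`, into cells of length `p + q`; cell `c` consists of a long segment of length `p`
(`long = true`) followed by a short one of length `q` (`long = false`). -/
def blockSegment (p q : ℕ) (long : Bool) (c : ℤ) : Finset ℤ :=
  Finset.Ico (1 + (p + q) * c + (if long then 0 else p : ℤ))
    (1 + (p + q) * c + (if long then p else p + q : ℤ))

section BlockSegment

variable {p q : ℕ} {long : Bool} {c c' x y : ℤ}

theorem mem_blockSegment : x ∈ blockSegment p q long c ↔
    1 + (p + q) * c + (if long then 0 else p : ℤ) ≤ x ∧
      x < 1 + (p + q) * c + (if long then p else p + q : ℤ) :=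
  Finset.mem_Ico

theorem mem_blockSegment_iff_emod_ediv (hp : 0 < p) : x ∈ blockSegment p q long c ↔
    decide ((x - 1) % (p + q) < p) = long ∧ (x - 1) / (p + q) = c := by
  have hpq : (0 : ℤ) < p + q := by omega
  have hdecomp := Int.emod_add_mul_ediv (x - 1) (p + q)
  have hmod_nonneg := Int.emod_nonneg (x - 1) hpq.ne'
  have hmod_lt := Int.emod_lt_of_pos (x - 1) hpq
  rw [mem_blockSegment]
  constructor
  · intro hx
    have hdiv : (x - 1) / (p + q) = c :=
      ((Int.ediv_emod_unique hpq).mpr ⟨sub_add_cancel (x - 1) ((p + q) * c),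
        by split_ifs at hx <;> omega, by split_ifs at hx <;> omega⟩).1
    rw [hdiv] at hdecomp
    refine ⟨?_, hdiv⟩
    cases long
    · rw [decide_eq_false_iff_not]
      simp only [Bool.false_eq_true, if_false] at hx
      omega
    · rw [decide_eq_true_iff]
      simp only [if_true] at hx
      omega
  · rintro ⟨rfl, rfl⟩
    simp only [decide_eq_true_eq]
    split_ifs <;> omega

theorem card_blockSegment_le (hqp : q ≤ p) : (blockSegment p q long c).card ≤ p := by
  rw [blockSegment, Int.card_Ico]
  split_ifs <;> omega

theorem natAbs_sub_le_of_mem_blockSegment (hqp : q ≤ p) (hx : x ∈ blockSegment p q long c)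
    (hy : y ∈ blockSegment p q long c) : (x - y).natAbs ≤ p := by
  rw [mem_blockSegment] at hx hy
  split_ifs at hx hy <;> omega

theorem le_natAbs_sub_of_mem_blockSegment (hqp : q ≤ p) (hc : c ≠ c')
    (hx : x ∈ blockSegment p q long c) (hy : y ∈ blockSegment p q long c') :
    q ≤ (x - y).natAbs := by
  wlog hlt : c < c' generalizing c c' x y
  · rw [← Int.natAbs_neg, neg_sub]
    exact this hc.symm hy hx (lt_of_le_of_ne (not_lt.mp hlt) hc.symm)
  have hstep : (p + q) * c + (p + q) ≤ ((p + q) * c' : ℤ) := by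
    rw [← mul_add_one]
    exact mul_le_mul_of_nonneg_left hlt (by positivity)
  rw [mem_blockSegment] at hx hy
  split_ifs at hx hy <;> omega

end BlockSegment

/-- The part of the observation window in cell `m` of the tiling that is, along the `i`-th
coordinate axis, in the long or the short segment according to `k i`; the sets with the same `k`
form one of the `2 ^ N` classes of blocks. -/
def block {N : ℕ} (p q n : Fin N → ℕ) (k : Fin N → Bool) (m : Fin N → ℤ) : Finset (Fin N → ℤ) :=
  {s ∈ obsIdx n | ∀ i, s i ∈ blockSegment (p i) (q i) (k i) (m i)}

/-- The indices of the cells of the tiling that meet the observation window. -/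
def cells {N : ℕ} (p q n : Fin N → ℕ) : Finset (Fin N → ℤ) :=
  Fintype.piFinset fun i => Finset.Icc 0 (((n i : ℤ) - 1) / (p i + q i))

section Blocks

variable {N : ℕ} {p q n : Fin N → ℕ} {k : Fin N → Bool} {m m' s t : Fin N → ℤ}

theorem blockIndex_mem_cells (hs : s ∈ obsIdx n) :
    (fun i => (s i - 1) / ((p i : ℤ) + q i)) ∈ cells p q n := by
  obtain ⟨hs1, hsn⟩ := Finset.mem_Icc.mp hs
  refine Fintype.mem_piFinset.mpr fun i => Finset.mem_Icc.mpr ⟨?_, ?_⟩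
  · exact Int.ediv_nonneg (sub_nonneg.mpr (hs1 i)) (by positivity)
  · rcases (by positivity : 0 ≤ (p i : ℤ) + q i).eq_or_lt with h0 | h0
    · rw [← h0, Int.ediv_zero, Int.ediv_zero]
    · exact Int.ediv_le_ediv h0 (sub_le_sub_right (hsn i) 1)

theorem sum_blocks (hp : ∀ i, 0 < p i) {M : Type*} [AddCommMonoid M] (f : (Fin N → ℤ) → M) :
    ∑ k, ∑ m ∈ cells p q n, ∑ s ∈ block p q n k m, f s = ∑ s ∈ obsIdx n, f s := by
  rw [← Finset.sum_fiberwise (obsIdx n) fun s i => decide ((s i - 1) % ((p i : ℤ) + q i) < p i)]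
  refine Finset.sum_congr rfl fun k _ => ?_
  rw [← Finset.sum_fiberwise_of_maps_to (t := cells p q n)
    fun s hs => blockIndex_mem_cells (Finset.mem_filter.mp hs).1]
  simp only [block, mem_blockSegment_iff_emod_ediv (hp _), forall_and, funext_iff,
    Finset.filter_filter]

theorem sum_card_block_le (hp : ∀ i, 0 < p i) (k : Fin N → Bool) :
    ∑ m ∈ cells p q n, (block p q n k m).card ≤ ∏ i, n i := by
  have htotal := sum_blocks (q := q) (n := n) hp fun _ => 1
  simp only [← Finset.card_eq_sum_ones] at htotal
  calc ∑ m ∈ cells p q n, (block p q n k m).card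
      ≤ ∑ k, ∑ m ∈ cells p q n, (block p q n k m).card :=
        Finset.single_le_sum (f := fun k => ∑ m ∈ cells p q n, (block p q n k m).card)
          (fun _ _ => Nat.zero_le _) (Finset.mem_univ k)
    _ = ∏ i, n i := by simp [htotal, obsIdx, Pi.card_Icc]

theorem card_block_le (hqp : ∀ i, q i ≤ p i) (k : Fin N → Bool) (m : Fin N → ℤ) :
    (block p q n k m).card ≤ ∏ i, p i := by
  have hsub : block p q n k m ⊆
      Fintype.piFinset fun i => blockSegment (p i) (q i) (k i) (m i) := fun s hs =>
    Fintype.mem_piFinset.mpr (Finset.mem_filter.mp hs).2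
  calc (block p q n k m).card ≤ ∏ i, (blockSegment (p i) (q i) (k i) (m i)).card :=
        (Finset.card_le_card hsub).trans_eq (Fintype.card_piFinset _)
    _ ≤ ∏ i, p i := Finset.prod_le_prod' fun i _ => card_blockSegment_le (hqp i)

theorem latDist_le_of_mem_block (hqp : ∀ i, q i ≤ p i) {b : ℕ} (hb : ∀ i, p i ≤ b)
    (hs : s ∈ block p q n k m) (ht : t ∈ block p q n k m) : latDist s t ≤ b :=
  latDist_le_iff.mpr fun i => (natAbs_sub_le_of_mem_blockSegment (hqp i)
    ((Finset.mem_filter.mp hs).2 i) ((Finset.mem_filter.mp ht).2 i)).trans (hb i)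

theorem le_latDist_of_mem_block (hqp : ∀ i, q i ≤ p i) {a : ℕ} (ha : ∀ i, a ≤ q i) (hm : m ≠ m')
    (hs : s ∈ block p q n k m) (ht : t ∈ block p q n k m') : a ≤ latDist s t := by
  obtain ⟨i, hi⟩ := Function.ne_iff.mp hm
  exact (ha i).trans ((le_natAbs_sub_of_mem_blockSegment (hqp i) hi
    ((Finset.mem_filter.mp hs).2 i) ((Finset.mem_filter.mp ht).2 i)).trans
      (natAbs_sub_le_latDist s t i))

theorem card_cells_mul_le (hp : ∀ i, 0 < p i) (hpn : ∀ i, p i ≤ n i) :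
    (cells p q n).card * ∏ i, p i ≤ 2 ^ N * ∏ i, n i := by
  have hcoord (i : Fin N) :
      (Finset.Icc 0 (((n i : ℤ) - 1) / (p i + q i))).card * p i ≤ 2 * n i := by
    have hnonneg : 0 ≤ ((n i : ℤ) - 1) / (p i + q i) := by
      have := hp i
      have := hpn i
      exact Int.ediv_nonneg (by omega) (by positivity)
    zify
    rw [Int.card_Icc_of_le _ _ (by linarith), sub_zero]
    calc (((n i : ℤ) - 1) / (p i + q i) + 1) * p i
        ≤ ((n i : ℤ) - 1) / (p i + q i) * (p i + q i) + p i := by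
          rw [add_mul, one_mul]
          gcongr
          exact le_add_of_nonneg_right (by positivity)
      _ ≤ ((n i : ℤ) - 1) + p i := by
          gcongr
          exact Int.ediv_mul_le _ (by have := hp i; omega)
      _ ≤ 2 * n i := by have := hpn i; omega
  calc (cells p q n).card * ∏ i, p i
      = ∏ i, (Finset.Icc 0 (((n i : ℤ) - 1) / (p i + q i))).card * p i := by
        rw [cells, Fintype.card_piFinset, Finset.prod_mul_distrib]
    _ ≤ ∏ i, 2 * n i := Finset.prod_le_prod' fun i _ => hcoord i
    _ = 2 ^ N * ∏ i, n i := by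
        rw [Finset.prod_mul_distrib, Finset.prod_const, Finset.card_univ, Fintype.card_fin]

end Blocks

theorem exp_one_le_twelve_mul_sqrt_exp_one : Real.exp 1 ≤ 12 * √(Real.exp 1) := by
  have hsqrt : √(Real.exp 1) ≤ 12 :=
    Real.sqrt_le_iff.mpr ⟨by norm_num, by linarith [Real.exp_one_lt_three]⟩
  calc Real.exp 1 = √(Real.exp 1) * √(Real.exp 1) :=
        (Real.mul_self_sqrt (Real.exp_pos 1).le).symm
    _ ≤ 12 * √(Real.exp 1) := by gcongr

theorem bernstein_bound_le {N : ℕ} {ρ ν σ2 B γ A β x : ℝ} (hρ : 0 ≤ ρ) (hν : 0 ≤ ν)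
    (hσ : 0 ≤ σ2) (hγ : 0 ≤ γ) (hA : 0 ≤ A) (hx : 0 ≤ x) (ε : ℝ) :
    2 * Real.exp (Real.exp 1 * 2 ^ N * ρ * x) *
        Real.exp (-β * ε + 2 ^ (2 * N) * β ^ 2 * (σ2 + 4 * B ^ 2 * γ * A) * ν) ≤
      2 * Real.exp (12 * √(Real.exp 1) * 2 ^ N * ρ * x) *
        Real.exp (-β * ε + 2 ^ (3 * N) * β ^ 2 * Real.exp 1 *
          (σ2 + 12 * B ^ 2 * γ * A) * ν) := by
  have hconst : 2 ^ (2 * N) * β ^ 2 ≤ 2 ^ (3 * N) * β ^ 2 * Real.exp 1 :=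
    calc 2 ^ (2 * N) * β ^ 2 ≤ 2 ^ (3 * N) * β ^ 2 := by
          gcongr <;> norm_num
      _ ≤ 2 ^ (3 * N) * β ^ 2 * Real.exp 1 :=
          le_mul_of_one_le_right (by positivity) (Real.one_le_exp zero_le_one)
  gcongr
  · exact exp_one_le_twelve_mul_sqrt_exp_one
  · norm_num

section Bernstein

variable {N : ℕ} {Ω : Type*} {mΩ : MeasurableSpace Ω} {P : Measure Ω}
  {Z : (Fin N → ℤ) → Ω → ℝ} {B σ2 t : ℝ} {n p q : Fin N → ℕ} {a b : ℕ}

theorem ae_abs_mul_sum_block_le_one (hB : ∀ s, ∀ᵐ ω ∂P, |Z s ω| ≤ B) (hqp : ∀ i, q i ≤ p i)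
    (ht : B * (∏ i, (p i : ℝ)) * |t| ≤ 1) (k : Fin N → Bool) (m : Fin N → ℤ) :
    ∀ᵐ ω ∂P, |t * ∑ s ∈ block p q n k m, Z s ω| ≤ 1 := by
  filter_upwards [ae_abs_sum_le_sum hB (block p q n k m), hB 0] with ω hω hω0
  have hB0 : 0 ≤ B := (abs_nonneg _).trans hω0
  have hcard : ((block p q n k m).card : ℝ) ≤ ∏ i, (p i : ℝ) := by
    exact_mod_cast card_block_le hqp k m
  calc |t * ∑ s ∈ block p q n k m, Z s ω| ≤ |t| * ((∏ i, (p i : ℝ)) * B) := by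
        rw [Finset.sum_const, nsmul_eq_mul] at hω
        rw [abs_mul]
        gcongr
        exact hω.trans (by gcongr)
    _ = B * (∏ i, (p i : ℝ)) * |t| := by ring
    _ ≤ 1 := ht

variable [IsProbabilityMeasure P]

theorem sum_variance_block_le (hZ : ∀ s, Measurable (Z s)) (hB : ∀ s, ∀ᵐ ω ∂P, |Z s ω| ≤ B)
    (hσ : ∀ s, Var[Z s; P] ≤ σ2) (hp : ∀ i, 0 < p i) (hqp : ∀ i, q i ≤ p i) (hb : ∀ i, p i ≤ b)
    (k : Fin N → Bool) :
    ∑ m ∈ cells p q n, Var[fun ω => ∑ s ∈ block p q n k m, Z s ω; P] ≤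
      (∏ i, (n i : ℝ)) * (σ2 + 4 * B ^ 2 * shellConst N * abar P Z b) := by
  have hσ0 : 0 ≤ σ2 := (variance_nonneg _ _).trans (hσ 0)
  have habar : 0 ≤ 4 * B ^ 2 * shellConst N * abar P Z b :=
    mul_nonneg (mul_nonneg (by positivity) (shellConst_nonneg N)) (abar_nonneg b)
  have hcard : ∑ m ∈ cells p q n, ((block p q n k m).card : ℝ) ≤ ∏ i, (n i : ℝ) := by
    exact_mod_cast sum_card_block_le hp k
  calc ∑ m ∈ cells p q n, Var[fun ω => ∑ s ∈ block p q n k m, Z s ω; P]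
      ≤ ∑ m ∈ cells p q n, ((block p q n k m).card : ℝ) *
          (σ2 + 4 * B ^ 2 * shellConst N * abar P Z b) :=
        Finset.sum_le_sum fun m _ => variance_sum_le hZ hB hσ fun s hs t ht =>
          latDist_le_of_mem_block hqp hb hs ht
    _ ≤ (∏ i, (n i : ℝ)) * (σ2 + 4 * B ^ 2 * shellConst N * abar P Z b) := by
        rw [← Finset.sum_mul]
        gcongr

theorem mgf_sum_blocks_le (hZ : ∀ s, Measurable (Z s)) (hB : ∀ s, ∀ᵐ ω ∂P, |Z s ω| ≤ B)
    (hmean : ∀ s, P[Z s] = 0) (hσ : ∀ s, Var[Z s; P] ≤ σ2) (hp : ∀ i, 0 < p i)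
    (hqp : ∀ i, q i ≤ p i) (hpn : ∀ i, p i ≤ n i) (ha : ∀ i, a ≤ q i) (hb : ∀ i, p i ≤ b)
    (ht : B * (∏ i, (p i : ℝ)) * |t| ≤ 1) (k : Fin N → Bool) :
    mgf (fun ω => ∑ m ∈ cells p q n, ∑ s ∈ block p q n k m, Z s ω) P t ≤
      Real.exp (Real.exp 1 * (2 ^ N * ((∏ i, (n i : ℝ)) / ∏ i, (p i : ℝ))) *
        alphaMix P Z a ^ ((∏ i, (p i : ℝ)) / ((∏ i, (n i : ℝ)) * (2 ^ N + 1)))) *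
      Real.exp (t ^ 2 * ((∏ i, (n i : ℝ)) * (σ2 + 4 * B ^ 2 * shellConst N * abar P Z b))) := by
  have hp0 : 0 < ∏ i, (p i : ℝ) := Finset.prod_pos fun i _ => Nat.cast_pos.mpr (hp i)
  have hpn' : ∏ i, (p i : ℝ) ≤ ∏ i, (n i : ℝ) := by
    exact_mod_cast Finset.prod_le_prod' fun i _ => hpn i
  have hcells : ((cells p q n).card : ℝ) * ∏ i, (p i : ℝ) ≤ 2 ^ N * ∏ i, (n i : ℝ) := by
    exact_mod_cast card_cells_mul_le hp hpn
  have hint (s : Fin N → ℤ) : Integrable (Z s) P :=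
    Integrable.of_bound (hZ s).aestronglyMeasurable B (hB s)
  refine (mgf_sum_le_exp_rpow_mul (fun m => fieldSigma_le hZ (block p q n k m))
    (fun m => Finset.measurable_fun_sum _ fun s hs => measurable_fieldSigma hs)
    (ae_abs_mul_sum_block_le_one hB hqp ht k)
    (fun m => by simp only [integral_finsetSum _ fun s _ => hint s, hmean, Finset.sum_const_zero])
    (strongMixingLE_iSup_ne fun m m' hm s hs t ht => le_latDist_of_mem_block hqp ha hm hs ht)
    (alphaMix_nonneg a) (alphaMix_le_one a) (L := 2 ^ N * ((∏ i, (n i : ℝ)) / ∏ i, (p i : ℝ)))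
    (θ := (∏ i, (p i : ℝ)) / ((∏ i, (n i : ℝ)) * (2 ^ N + 1))) ?_ ?_).trans ?_
  · rw [div_mul_eq_mul_div, div_le_one (mul_pos (hp0.trans_le hpn') (by positivity))]
    linarith
  · rwa [← mul_div_assoc, le_div_iff₀ hp0]
  · gcongr
    exact sum_variance_block_le hZ hB hσ hp hqp hb k

theorem mgf_sum_obsIdx_le (hZ : ∀ s, Measurable (Z s)) (hB : ∀ s, ∀ᵐ ω ∂P, |Z s ω| ≤ B)
    (hmean : ∀ s, P[Z s] = 0) (hσ : ∀ s, Var[Z s; P] ≤ σ2) (hp : ∀ i, 0 < p i)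
    (hqp : ∀ i, q i ≤ p i) (hpn : ∀ i, p i ≤ n i) (ha : ∀ i, a ≤ q i) (hb : ∀ i, p i ≤ b)
    (ht : 2 ^ N * B * (∏ i, (p i : ℝ)) * |t| ≤ 1) :
    mgf (fun ω => ∑ s ∈ obsIdx n, Z s ω) P t ≤
      Real.exp (Real.exp 1 * 2 ^ N * ((∏ i, (n i : ℝ)) / ∏ i, (p i : ℝ)) *
        alphaMix P Z a ^ ((∏ i, (p i : ℝ)) / ((∏ i, (n i : ℝ)) * (2 ^ N + 1)))) *
      Real.exp (2 ^ (2 * N) * t ^ 2 * (σ2 + 4 * B ^ 2 * shellConst N * abar P Z b) *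
        ∏ i, (n i : ℝ)) := by
  have hclasses : (Fintype.card (Fin N → Bool) : ℝ) = 2 ^ N := by simp
  have hsum : (fun ω => ∑ s ∈ obsIdx n, Z s ω) =
      fun ω => ∑ k, ∑ m ∈ cells p q n, ∑ s ∈ block p q n k m, Z s ω :=
    funext fun ω => (sum_blocks hp fun s => Z s ω).symm
  rw [hsum]
  refine mgf_sum_le_of_forall_mgf_le (fun k => ?_) fun k => ?_
  · exact integrable_exp_mul_sum
      (fun m => (Finset.measurable_fun_sum _ fun s _ => hZ s).aemeasurable)
      (fun m => ae_abs_sum_le_sum hB (block p q n k m)) _ _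
  · rw [hclasses]
    have ht' : B * (∏ i, (p i : ℝ)) * |2 ^ N * t| ≤ 1 := by
      rw [abs_mul, abs_of_pos (by positivity)]
      linarith
    refine (mgf_sum_blocks_le hZ hB hmean hσ hp hqp hpn ha hb ht' k).trans_eq ?_
    congr 2 <;> ring

theorem bernstein_spatial_lattice_general {β : ℝ} (hZ : ∀ s, Measurable (Z s))
    (hB : ∀ s, ∀ᵐ ω ∂P, |Z s ω| ≤ B) (hmean : ∀ s, ∫ ω, Z s ω ∂P = 0)
    (hσ : ∀ s, ∫ ω, Z s ω ^ 2 ∂P ≤ σ2) (hp : ∀ i, 0 < p i) (hqp : ∀ i, q i ≤ p i)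
    (hpn : ∀ i, p i ≤ n i) (ha : ∀ i, a ≤ q i) (hb : ∀ i, p i ≤ b) (hβ0 : 0 ≤ β)
    (hβ : 2 ^ N * B * (∏ i, (p i : ℝ)) * β ≤ 1) (ε : ℝ) :
    P {ω | ε ≤ |∑ s ∈ obsIdx n, Z s ω|} ≤ ENNReal.ofReal
      (2 * Real.exp (12 * √(Real.exp 1) * 2 ^ N * ((∏ i, (n i : ℝ)) / ∏ i, (p i : ℝ)) *
          alphaMix P Z a ^ ((∏ i, (p i : ℝ)) / ((∏ i, (n i : ℝ)) * (2 ^ N + 1)))) *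
        Real.exp (-β * ε + 2 ^ (3 * N) * β ^ 2 * Real.exp 1 *
          (σ2 + 12 * B ^ 2 * shellConst N * abar P Z b) * ∏ i, (n i : ℝ))) := by
  have hVar (s : Fin N → ℤ) : Var[Z s; P] ≤ σ2 :=
    (variance_of_integral_eq_zero (hZ s).aemeasurable (hmean s)).trans_le (hσ s)
  have hpos := mgf_sum_obsIdx_le hZ hB hmean hVar hp hqp hpn ha hb (t := β)
    (by rwa [abs_of_nonneg hβ0])
  have hneg := mgf_sum_obsIdx_le hZ hB hmean hVar hp hqp hpn ha hb (t := -β)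
    (by rwa [abs_neg, abs_of_nonneg hβ0])
  rw [neg_sq] at hneg
  have hint := integrable_exp_mul_sum (fun s => (hZ s).aemeasurable) hB (obsIdx n)
  rw [← ofReal_measureReal]
  refine ENNReal.ofReal_le_ofReal
    ((measureReal_le_abs_le_exp_mul_mgf_add hβ0 (hint β) (hint (-β)) ε).trans
      ((mul_le_mul_of_nonneg_left (add_le_add hpos hneg) (Real.exp_pos _).le).trans
        (le_of_eq_of_le ?_ (bernstein_bound_le (by positivity) (by positivity)
          ((variance_nonneg _ _).trans (hVar 0)) (shellConst_nonneg N) (abar_nonneg b)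
          (Real.rpow_nonneg (alphaMix_nonneg a) _) ε))))
  rw [Real.exp_add]
  ring

end Bernstein

end

/-- Bernstein inequality for spatial lattice processes. -/
theorem bernstein_spatial_lattice (N : ℕ) (hN : 0 < N) :
    ∃ γc : ℝ, ∀ (Ω : Type) (_ : MeasurableSpace Ω) (P : Measure Ω),
      IsProbabilityMeasure P →
      ∀ (Z : (Fin N → ℤ) → Ω → ℝ), (∀ s, Measurable (Z s)) →
      -- strong mixing
      Tendsto (alphaMix P Z) atTop (nhds 0) →
      ∀ (B σ2 : ℝ),
      (∀ s, ∀ᵐ ω ∂P, |Z s ω| ≤ B) →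
      (∀ s, ∫ ω, Z s ω ∂P = 0) →
      (∀ s, ∫ ω, (Z s ω) ^ 2 ∂P ≤ σ2) →
      ∀ (n : Fin N → ℕ) (Pseq Qseq : Fin N → ℕ → ℕ),
      (∀ i, Monotone (Pseq i)) → (∀ i, Monotone (Qseq i)) →
      (∀ i, 1 ≤ Qseq i (n i) ∧ Qseq i (n i) ≤ Pseq i (n i) ∧
        Pseq i (n i) < Qseq i (n i) + Pseq i (n i) ∧ Qseq i (n i) + Pseq i (n i) < n i) →
      ∀ ε β : ℝ, 0 < ε → 0 < β →
      2 ^ (N + 1) * B * (∏ i, (Pseq i (n i) : ℝ)) * Real.exp 1 * β < 1 →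
      P {ω | ε < |∑ s ∈ obsIdx n, Z s ω|} ≤ ENNReal.ofReal
        (2 * Real.exp (12 * Real.sqrt (Real.exp 1) * 2 ^ N *
            ((∏ i, (n i : ℝ)) / ∏ i, (Pseq i (n i) : ℝ)) *
            (alphaMix P Z (Finset.univ.inf' (Finset.univ_nonempty_iff.mpr ⟨⟨0, hN⟩⟩)
                fun i => Qseq i (n i))) ^
              ((∏ i, (Pseq i (n i) : ℝ)) / ((∏ i, (n i : ℝ)) * (2 ^ N + 1)))) *
          Real.exp (-β * ε + 2 ^ (3 * N) * β ^ 2 * Real.exp 1 *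
            (σ2 + 12 * B ^ 2 * γc *
              abar P Z (Finset.univ.sup' (Finset.univ_nonempty_iff.mpr ⟨⟨0, hN⟩⟩)
                fun i => Pseq i (n i))) *
            ∏ i, (n i : ℝ))) := by
  refine ⟨shellConst N, fun Ω _ P _ Z hZ _ B σ2 hB hmean hσ n Pseq Qseq _ _ hPQ ε β _ hβ hβ1 => ?_⟩
  have hβ2 : 2 ^ N * B * (∏ i, (Pseq i (n i) : ℝ)) * β ≤ 1 := by
    rw [pow_succ] at hβ1
    nlinarith [Real.add_one_le_exp 1]
  exact (measure_mono (Set.ofPred_subset_ofPred.mpr fun _ => le_of_lt)).trans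
    (bernstein_spatial_lattice_general hZ hB hmean hσ
      (fun i => (hPQ i).1.trans (hPQ i).2.1) (fun i => (hPQ i).2.1)
      (fun i => ((hPQ i).2.2.1.trans (hPQ i).2.2.2).le)
      (fun i => Finset.inf'_le _ (Finset.mem_univ i))
      (fun i => Finset.le_sup' (fun i => Pseq i (n i)) (Finset.mem_univ i)) hβ.le hβ2 ε)
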